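/- arXiv:1510.07838 — 3 statements merged into one kernel-verified Lean document; each statement's English description precedes it below -/
import Mathlib

section
/- Let N ≥ 1 and 1 ≤ r ≤ ∞. There exists a constant c* > 0, depending only on N and r, such that for every ρ > 0 and every nonnegative measurable function φ on ℝ^N with |||φ|||_{r,ρ} < ∞, one has ‖S(t)φ‖_{L^∞(ℝ^N)} ≤ c* t^{−N/(2r)} |||φ|||_{r,ρ} for all 0 < t ≤ ρ². -/
open MeasureTheory ENNReal Filter

noncomputable section

/-- Euclidean space `ℝ^N`. -/
abbrev Euc (N : ℕ) := EuclideanSpace ℝ (Fin N)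

/-- The heat semigroup applied to a (nonnegative) function `φ` on `ℝ^N`, with values in `[0,∞]`:
`[S(t)φ](x) = ∫ (4πt)^{-N/2} exp(-|x-y|²/(4t)) φ(y) dy`. -/
noncomputable def heatS (N : ℕ) (t : ℝ) (φ : Euc N → ℝ) (x : Euc N) : ℝ≥0∞ :=
  ∫⁻ y, ENNReal.ofReal
    ((4 * Real.pi * t) ^ (-(N : ℝ) / 2) * Real.exp (-‖x - y‖ ^ 2 / (4 * t)) * φ y)

/-- The `L^∞` norm of `S(t)φ` on `ℝ^N`. -/
noncomputable def heatSup (N : ℕ) (t : ℝ) (φ : Euc N → ℝ) : ℝ≥0∞ :=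
  essSup (heatS N t φ) volume

/-- The `L^{r,∞}(E)` quasinorm: for `1 < r < ∞` it is
`sup_{λ>0} λ |{x ∈ E : |f x| > λ}|^{1/r}`; for `r = 1` (resp. `r = ∞`)
it is the usual `L¹(E)` (resp. `L^∞(E)`) norm. -/
noncomputable def wnorm (N : ℕ) (r : ℝ≥0∞) (f : Euc N → ℝ) (E : Set (Euc N)) : ℝ≥0∞ :=
  if r = 1 then ∫⁻ x in E, ENNReal.ofReal |f x|
  else if r = ⊤ then essSup (fun x => ENNReal.ofReal |f x|) (volume.restrict E)
  else ⨆ (l : ℝ) (_ : 0 < l), ENNReal.ofReal l * (volume {x ∈ E | l < |f x|}) ^ (1 / r.toReal)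

/-- The uniformly local quasinorm `|||f|||_{r,ρ} = sup_x ‖f‖_{L^{r,∞}(B(x,ρ))}`
(for `r = ∞` it is the `L^∞(ℝ^N)` norm). -/
noncomputable def ulocNorm (N : ℕ) (r : ℝ≥0∞) (ρ : ℝ) (f : Euc N → ℝ) : ℝ≥0∞ :=
  if r = ⊤ then essSup (fun x => ENNReal.ofReal |f x|) volume
  else ⨆ x : Euc N, wnorm N r f (Metric.ball x ρ)

/-- `u ∈ L^∞(τ, T-τ; L^∞(ℝ^N))` for every `τ ∈ (0, T/2)`. -/
def LocBdd (N : ℕ) (T : ℝ≥0∞) (u : Euc N → ℝ → ℝ) : Prop :=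
  ∀ τ : ℝ, 0 < τ → ENNReal.ofReal (2 * τ) < T →
    ∃ M : ℝ, ∀ t : ℝ, τ ≤ t → ENNReal.ofReal (t + τ) ≤ T →
      ∀ᵐ x ∂(volume : Measure (Euc N)), |u x t| ≤ M

/-- Regularity requirements on a pair `(u,v)`: nonnegativity, joint measurability and
uniform boundedness away from `t = 0` and `t = T`. -/
def PairRegular (N : ℕ) (T : ℝ≥0∞) (u v : Euc N → ℝ → ℝ) : Prop :=
  (∀ x t, 0 ≤ u x t) ∧ (∀ x t, 0 ≤ v x t) ∧
  Measurable (Function.uncurry u) ∧ Measurable (Function.uncurry v) ∧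
  LocBdd N T u ∧ LocBdd N T v

/-- The Duhamel identities for the system (S) `∂ₜu = Δu + v^p`, `∂ₜv = Δv + u^q` at time `t`. -/
def DuhamelSys (N : ℕ) (p q : ℝ) (u₀ v₀ : Euc N → ℝ) (u v : Euc N → ℝ → ℝ) (t : ℝ) : Prop :=
  (∀ᵐ x ∂(volume : Measure (Euc N)), ENNReal.ofReal (u x t) =
      heatS N t u₀ x + ∫⁻ s in Set.Ioo 0 t, heatS N (t - s) (fun y => v y s ^ p) x) ∧
  (∀ᵐ x ∂(volume : Measure (Euc N)), ENNReal.ofReal (v x t) =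
      heatS N t v₀ x + ∫⁻ s in Set.Ioo 0 t, heatS N (t - s) (fun y => u y s ^ q) x)

/-- The Duhamel inequalities (`≥`, with finite left-hand side) for the system (S) at time `t`. -/
def DuhamelSuperSys (N : ℕ) (p q : ℝ) (u₀ v₀ : Euc N → ℝ) (u v : Euc N → ℝ → ℝ) (t : ℝ) : Prop :=
  (∀ᵐ x ∂(volume : Measure (Euc N)),
      heatS N t u₀ x + (∫⁻ s in Set.Ioo 0 t, heatS N (t - s) (fun y => v y s ^ p) x) ≤
        ENNReal.ofReal (u x t)) ∧
  (∀ᵐ x ∂(volume : Measure (Euc N)),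
      heatS N t v₀ x + (∫⁻ s in Set.Ioo 0 t, heatS N (t - s) (fun y => u y s ^ q) x) ≤
        ENNReal.ofReal (v x t))

/-- `(u,v)` is a solution of the system (S) on `ℝ^N × (0,T)`. -/
def IsSolSys (N : ℕ) (p q : ℝ) (u₀ v₀ : Euc N → ℝ) (T : ℝ≥0∞) (u v : Euc N → ℝ → ℝ) : Prop :=
  PairRegular N T u v ∧
  ∀ t : ℝ, 0 < t → ENNReal.ofReal t < T → DuhamelSys N p q u₀ v₀ u v t

/-- `(u,v)` is a supersolution of the system (S) on `ℝ^N × (0,T)`. -/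
def IsSuperSys (N : ℕ) (p q : ℝ) (u₀ v₀ : Euc N → ℝ) (T : ℝ≥0∞) (u v : Euc N → ℝ → ℝ) : Prop :=
  PairRegular N T u v ∧
  ∀ t : ℝ, 0 < t → ENNReal.ofReal t < T → DuhamelSuperSys N p q u₀ v₀ u v t

/-- `(u,v)` is the minimal solution of the system (S) on `ℝ^N × (0,T)`. -/
def IsMinSolSys (N : ℕ) (p q : ℝ) (u₀ v₀ : Euc N → ℝ) (T : ℝ≥0∞)
    (u v : Euc N → ℝ → ℝ) : Prop :=
  IsSolSys N p q u₀ v₀ T u v ∧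
  ∀ u' v' : Euc N → ℝ → ℝ, IsSolSys N p q u₀ v₀ T u' v' →
    ∀ t : ℝ, 0 < t → ENNReal.ofReal t < T →
      (∀ᵐ x ∂(volume : Measure (Euc N)), u x t ≤ u' x t) ∧
      (∀ᵐ x ∂(volume : Measure (Euc N)), v x t ≤ v' x t)

/-- Regularity requirements on a scalar function `w`. -/
def ScalarRegular (N : ℕ) (T : ℝ≥0∞) (w : Euc N → ℝ → ℝ) : Prop :=
  (∀ x t, 0 ≤ w x t) ∧ Measurable (Function.uncurry w) ∧ LocBdd N T w

/-- The Duhamel identity for the scalar problem (E) `∂ₜw = Δw + α w^A + β w^B` at time `t`. -/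
def DuhamelScalar (N : ℕ) (α β A B : ℝ) (w₀ : Euc N → ℝ) (w : Euc N → ℝ → ℝ) (t : ℝ) : Prop :=
  ∀ᵐ x ∂(volume : Measure (Euc N)), ENNReal.ofReal (w x t) =
    heatS N t w₀ x +
      ∫⁻ s in Set.Ioo 0 t, heatS N (t - s) (fun y => α * w y s ^ A + β * w y s ^ B) x

/-- The Duhamel inequality (`≥`, with finite left-hand side) for the scalar problem (E). -/
def DuhamelSuperScalar (N : ℕ) (α β A B : ℝ) (w₀ : Euc N → ℝ) (w : Euc N → ℝ → ℝ)
    (t : ℝ) : Prop :=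
  ∀ᵐ x ∂(volume : Measure (Euc N)),
    heatS N t w₀ x +
        (∫⁻ s in Set.Ioo 0 t, heatS N (t - s) (fun y => α * w y s ^ A + β * w y s ^ B) x) ≤
      ENNReal.ofReal (w x t)

/-- `w` is a solution of the scalar problem (E) on `ℝ^N × (0,T)`. -/
def IsSolScalar (N : ℕ) (α β A B : ℝ) (w₀ : Euc N → ℝ) (T : ℝ≥0∞)
    (w : Euc N → ℝ → ℝ) : Prop :=
  ScalarRegular N T w ∧
  ∀ t : ℝ, 0 < t → ENNReal.ofReal t < T → DuhamelScalar N α β A B w₀ w t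

/-- `w` is a supersolution of the scalar problem (E) on `ℝ^N × (0,T)`. -/
def IsSuperScalar (N : ℕ) (α β A B : ℝ) (w₀ : Euc N → ℝ) (T : ℝ≥0∞)
    (w : Euc N → ℝ → ℝ) : Prop :=
  ScalarRegular N T w ∧
  ∀ t : ℝ, 0 < t → ENNReal.ofReal t < T → DuhamelSuperScalar N α β A B w₀ w t

/-- The Duhamel identities for the strongly coupled system (SC)
`∂ₜu = Δu + u^{p₁} v^{p₂}`, `∂ₜv = Δv + u^{q₁} v^{q₂}` at time `t`. -/
def DuhamelSC (N : ℕ) (p₁ p₂ q₁ q₂ : ℝ) (u₀ v₀ : Euc N → ℝ) (u v : Euc N → ℝ → ℝ)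
    (t : ℝ) : Prop :=
  (∀ᵐ x ∂(volume : Measure (Euc N)), ENNReal.ofReal (u x t) =
      heatS N t u₀ x +
        ∫⁻ s in Set.Ioo 0 t, heatS N (t - s) (fun y => u y s ^ p₁ * v y s ^ p₂) x) ∧
  (∀ᵐ x ∂(volume : Measure (Euc N)), ENNReal.ofReal (v x t) =
      heatS N t v₀ x +
        ∫⁻ s in Set.Ioo 0 t, heatS N (t - s) (fun y => u y s ^ q₁ * v y s ^ q₂) x)

/-- `(u,v)` is a solution of the strongly coupled system (SC) on `ℝ^N × (0,T)`. -/
def IsSolSC (N : ℕ) (p₁ p₂ q₁ q₂ : ℝ) (u₀ v₀ : Euc N → ℝ) (T : ℝ≥0∞)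
    (u v : Euc N → ℝ → ℝ) : Prop :=
  PairRegular N T u v ∧
  ∀ t : ℝ, 0 < t → ENNReal.ofReal t < T → DuhamelSC N p₁ p₂ q₁ q₂ u₀ v₀ u v t

/-- Weak-type bound integrated over a set of finite volume. -/
theorem weak_int {N : ℕ} {q : ℝ} (hq : 1 < q) (φ : Euc N → ℝ) (hφ : Measurable φ)
    (h0 : ∀ x, 0 ≤ φ x) (A : Set (Euc N)) (V K : ℝ) (hV : 0 < V)
    (hK : 0 < K) (hA : volume A = ENNReal.ofReal V)
    (hw : ∀ l : ℝ, 0 < l →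
      ENNReal.ofReal l * (volume {x ∈ A | l < φ x}) ^ (1 / q) ≤ ENNReal.ofReal K) :
    ∫⁻ y in A, ENNReal.ofReal (φ y) ≤
      ENNReal.ofReal (q / (q - 1) * (V * V ^ (-1 / q)) * K) := by
  have hq0 : 0 < q := by linarith
  rw [lintegral_eq_lintegral_meas_lt (volume.restrict A) (ae_of_all _ h0) hφ.aemeasurable]
  set l : ℝ := K * V ^ (-1 / q) with hl
  have hl0 : 0 < l := by positivity
  have hms : ∀ a : ℝ, (volume.restrict A) {x | a < φ x} = volume {x ∈ A | a < φ x} := by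
    intro a
    rw [Measure.restrict_apply (measurableSet_lt measurable_const hφ), Set.inter_comm]
    rfl
  have hsm : ∀ a : ℝ, 0 < a → volume {x ∈ A | a < φ x} ≤ ENNReal.ofReal (K ^ q * a ^ (-q)) := by
    intro a ha
    have h1 := hw a ha
    have h2 : (volume {x ∈ A | a < φ x}) ^ (1 / q) ≤ ENNReal.ofReal (K / a) := by
      rw [ENNReal.ofReal_div_of_pos ha, ENNReal.le_div_iff_mul_le]
      · rwa [mul_comm]
      · left; simpa using ha
      · left; simp
    rw [one_div] at h2
    have h3 := (ENNReal.rpow_inv_le_iff hq0).1 h2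
    refine h3.trans (le_of_eq ?_)
    rw [ENNReal.ofReal_rpow_of_pos (by positivity), Real.div_rpow hK.le ha.le,
      Real.rpow_neg ha.le, div_eq_mul_inv]
  have hsplit : Set.Ioi (0:ℝ) = Set.Ioc 0 l ∪ Set.Ioi l := by
    rw [Set.Ioc_union_Ioi_eq_Ioi hl0.le]
  rw [hsplit]
  refine (lintegral_union_le _ _ _).trans ?_
  have e1 : ∫⁻ a in Set.Ioc 0 l, (volume.restrict A) {x | a < φ x} ≤ ENNReal.ofReal (V * l) := by
    calc _ ≤ ∫⁻ a in Set.Ioc 0 l, ENNReal.ofReal V := by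
          refine lintegral_mono fun a => ?_
          rw [hms, ← hA]
          exact measure_mono fun x hx => hx.1
      _ = _ := by
          rw [lintegral_const, Measure.restrict_apply_univ, Real.volume_Ioc,
            ENNReal.ofReal_mul hV.le, sub_zero]
  have e2 : ∫⁻ a in Set.Ioi l, (volume.restrict A) {x | a < φ x} ≤
      ENNReal.ofReal (K ^ q * (l ^ (1 - q) / (q - 1))) := by
    calc _ ≤ ∫⁻ a in Set.Ioi l, ENNReal.ofReal (K ^ q * a ^ (-q)) := by
          refine setLIntegral_mono' measurableSet_Ioi fun a ha => ?_
          rw [hms]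
          exact hsm a (hl0.trans ha)
      _ = ENNReal.ofReal (∫ a in Set.Ioi l, K ^ q * a ^ (-q)) := by
          rw [ofReal_integral_eq_lintegral_ofReal]
          · exact (integrableOn_Ioi_rpow_of_lt (by linarith) hl0).const_mul _
          · refine (ae_restrict_iff' measurableSet_Ioi).2 (ae_of_all _ fun a ha => ?_)
            have : 0 < a := hl0.trans ha
            simp only [Pi.zero_apply]
            positivity
      _ = _ := by
          rw [integral_const_mul, integral_Ioi_rpow_of_lt (by linarith) hl0]
          congr 2
          rw [show -q + 1 = -(q - 1) by ring, show 1 - q = -(q-1) by ring, neg_div_neg_eq]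
  refine (add_le_add e1 e2).trans ?_
  have hq1 : 0 < q - 1 := by linarith
  rw [← ENNReal.ofReal_add (by positivity) (by positivity)]
  apply ENNReal.ofReal_le_ofReal
  have e3 : K ^ q * l ^ (1 - q) = V * l := by
    rw [hl, Real.mul_rpow hK.le (by positivity), ← Real.rpow_mul hV.le, ← mul_assoc,
      ← Real.rpow_add hK, mul_left_comm]
    rw [show q + (1 - q) = 1 by ring, Real.rpow_one]
    congr 1
    nth_rewrite 2 [← Real.rpow_one V]
    rw [← Real.rpow_add hV]
    congr 1
    field_simp
    ring
  rw [← mul_div_assoc, e3, hl]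
  apply le_of_eq
  field_simp
  ring

theorem vol_ball {N : ℕ} (hN : 1 ≤ N) : ∃ v : ℝ, 0 < v ∧ ∀ (z : Euc N) (s : ℝ), 0 < s →
    volume (Metric.ball z s) = ENNReal.ofReal (s ^ N * v) := by
  refine ⟨(volume (Metric.ball (0 : Euc N) 1)).toReal, ?_, ?_⟩
  · exact ENNReal.toReal_pos (Metric.measure_ball_pos _ _ one_pos).ne' measure_ball_lt_top.ne
  · intro z s hs
    rw [Measure.addHaar_ball_of_pos _ _ hs, ENNReal.ofReal_mul (by positivity),
      ENNReal.ofReal_toReal measure_ball_lt_top.ne]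
    simp

theorem avg_bound (N : ℕ) (hN : 1 ≤ N) (r : ℝ≥0∞) (hr : 1 ≤ r) :
    ∃ C : ℝ, 0 < C ∧ ∀ ρ : ℝ, 0 < ρ → ∀ φ : Euc N → ℝ, Measurable φ → (∀ x, 0 ≤ φ x) →
      ulocNorm N r ρ φ < ⊤ → ∀ s : ℝ, 0 < s → s ≤ ρ → ∀ z : Euc N,
      ∫⁻ y in Metric.ball z s, ENNReal.ofReal (φ y) ≤
        ENNReal.ofReal (C * (s ^ N * s ^ (if r = ⊤ then (0 : ℝ) else -(N : ℝ) / r.toReal))) *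
          ulocNorm N r ρ φ := by
  obtain ⟨v, hv, hvol⟩ := vol_ball hN
  by_cases hT : r = ⊤
  · refine ⟨v, hv, fun ρ hρ φ hφ h0 hfin s hs hsρ z => ?_⟩
    simp only [ulocNorm, if_pos hT, Real.rpow_zero, mul_one]
    calc _ ≤ ∫⁻ y in Metric.ball z s, essSup (fun x => ENNReal.ofReal |φ x|) volume := by
          refine lintegral_mono_ae (ae_restrict_of_ae ?_)
          filter_upwards [ENNReal.ae_le_essSup (fun x => ENNReal.ofReal |φ x|)] with y hy
          rwa [abs_of_nonneg (h0 y)] at hy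
      _ = _ := by
          rw [lintegral_const, Measure.restrict_apply_univ, hvol z s hs, mul_comm, mul_comm v]
  by_cases h1 : r = 1
  · refine ⟨1, one_pos, fun ρ hρ φ hφ h0 hfin s hs hsρ z => ?_⟩
    subst h1
    simp only [ulocNorm, wnorm, if_neg hT, if_true]
    have : s ^ N * s ^ (-(N:ℝ) / (1 : ℝ≥0∞).toReal) = 1 := by
      rw [ENNReal.toReal_one, div_one, Real.rpow_neg hs.le, Real.rpow_natCast]
      exact mul_inv_cancel₀ (by positivity)
    rw [this, mul_one, ENNReal.ofReal_one, one_mul]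
    refine le_trans ?_ (le_iSup _ z)
    simp only [abs_of_nonneg (h0 _)]
    exact lintegral_mono_set (Metric.ball_subset_ball hsρ)
  set q := r.toReal with hqd
  have hq : 1 < q := by
    have : (1:ℝ≥0∞) < r := lt_of_le_of_ne hr (Ne.symm h1)
    rw [← ENNReal.ofReal_toReal hT, ← ENNReal.ofReal_one] at this
    exact (ENNReal.ofReal_lt_ofReal_iff_of_nonneg zero_le_one).1 this
  have hq1 : 0 < q - 1 := by linarith
  have hq0 : 0 < q := by linarith
  refine ⟨q / (q - 1) * (v * v ^ (-1 / q)), by positivity,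
    fun ρ hρ φ hφ h0 hfin s hs hsρ z => ?_⟩
  simp only [if_neg hT]
  have key : ∀ K : ℝ, 0 < K → ulocNorm N r ρ φ ≤ ENNReal.ofReal K →
      ∫⁻ y in Metric.ball z s, ENNReal.ofReal (φ y) ≤
      ENNReal.ofReal (q / (q - 1) * (v * v ^ (-1 / q)) * (s ^ N * s ^ (-(N : ℝ) / q)))
        * ENNReal.ofReal K := by
    intro K hK hKle
    refine (weak_int hq φ hφ h0 _ (s ^ N * v) K (by positivity) hK (hvol z s hs) ?_).trans
      (le_of_eq ?_)
    · intro l hl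
      refine le_trans ?_ hKle
      simp only [ulocNorm, wnorm, if_neg hT, if_neg h1]
      refine le_trans ?_ (le_iSup _ z)
      refine le_trans ?_ (le_iSup₂ (f := fun (l : ℝ) (_ : 0 < l) => ENNReal.ofReal l *
        (volume {x ∈ Metric.ball z ρ | l < |φ x|}) ^ (1 / r.toReal)) l hl)
      gcongr
      exact le_abs_self _
    · rw [← ENNReal.ofReal_mul (by positivity)]
      congr 1
      rw [Real.mul_rpow (by positivity) hv.le, ← Real.rpow_natCast s N, ← Real.rpow_mul hs.le]
      rw [show (N : ℝ) * (-1 / q) = -(N:ℝ) / q by ring]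
      ring
  set B := q / (q - 1) * (v * v ^ (-1 / q)) * (s ^ N * s ^ (-(N : ℝ) / q)) with hB
  have hBp : 0 < B := by positivity
  have hdiv : (∫⁻ y in Metric.ball z s, ENNReal.ofReal (φ y)) / ENNReal.ofReal B ≤
      ulocNorm N r ρ φ := by
    refine le_of_forall_gt_imp_ge_of_dense fun K hK => ?_
    by_cases hKT : K = ⊤
    · simp [hKT]
    have hKp : 0 < K.toReal := ENNReal.toReal_pos (ne_bot_of_gt hK) hKT
    have := key K.toReal hKp (by rw [ENNReal.ofReal_toReal hKT]; exact hK.le)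
    rw [ENNReal.ofReal_toReal hKT] at this
    exact ENNReal.div_le_of_le_mul' this
  have := (ENNReal.div_le_iff_le_mul (Or.inl (by simpa using hBp)) (Or.inl (by simp))).1 hdiv
  rwa [mul_comm] at this

theorem gauss_lint (N : ℕ) (b : ℝ) (hb : 0 < b) (x : Euc N) :
    ∫⁻ z, ENNReal.ofReal (Real.exp (-b * ‖x - z‖ ^ 2)) =
      ENNReal.ofReal ((Real.pi / b) ^ ((N : ℝ) / 2)) := by
  rw [lintegral_sub_left_eq_self (fun z : Euc N => ENNReal.ofReal (Real.exp (-b * ‖z‖ ^ 2))) x]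
  have h := GaussianFourier.integral_rexp_neg_mul_sq_norm (V := Euc N) hb
  rw [finrank_euclideanSpace_fin] at h
  rw [← h, ofReal_integral_eq_lintegral_ofReal]
  · apply Integrable.of_integral_ne_zero
    rw [h]
    have := Real.pi_pos
    positivity
  · exact ae_of_all _ fun z => (Real.exp_pos _).le

theorem heat_conv (N : ℕ) (t s v : ℝ) (ht : 0 < t) (hs : 0 < s) (hst : s ^ 2 = t)
    (hvol : ∀ z : Euc N, volume (Metric.ball z s) = ENNReal.ofReal v)
    (φ : Euc N → ℝ) (hφ : Measurable φ) (M : ℝ≥0∞)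
    (hM : ∀ z, ∫⁻ y in Metric.ball z s, ENNReal.ofReal (φ y) ≤ M) (x : Euc N) :
    ENNReal.ofReal v * ∫⁻ y, ENNReal.ofReal (Real.exp (-‖x - y‖ ^ 2 / (4 * t))) *
        ENNReal.ofReal (φ y) ≤
      ENNReal.ofReal (Real.exp (1 / 4) * (8 * Real.pi * t) ^ ((N : ℝ) / 2)) * M := by
  set G : Euc N → ℝ≥0∞ := fun z =>
    ENNReal.ofReal (Real.exp (1 / 4) * Real.exp (-(1 / (8 * t)) * ‖x - z‖ ^ 2)) with hG
  have hGm : Measurable G := by fun_prop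
  have hφm : Measurable fun y => ENNReal.ofReal (φ y) := hφ.ennreal_ofReal
  have hS : MeasurableSet {p : Euc N × Euc N | dist p.1 p.2 < s} :=
    (isOpen_lt (by fun_prop) continuous_const).measurableSet
  have pt : ∀ y, ENNReal.ofReal v * ENNReal.ofReal (Real.exp (-‖x - y‖ ^ 2 / (4 * t))) ≤
      ∫⁻ z in Metric.ball y s, G z := by
    intro y
    rw [← hvol y, mul_comm, ← setLIntegral_const]
    refine setLIntegral_mono' Metric.isOpen_ball.measurableSet fun z hz => ?_
    apply ENNReal.ofReal_le_ofReal
    rw [← Real.exp_add, Real.exp_le_exp]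
    have h1 : ‖x - z‖ ≤ ‖x - y‖ + ‖z - y‖ := by
      have := norm_sub_le (x - y) (z - y)
      rwa [sub_sub_sub_cancel_right] at this
    have h2 : ‖z - y‖ < s := by simpa [dist_eq_norm] using hz
    have h3 : ‖x - z‖ ^ 2 ≤ 2 * ‖x - y‖ ^ 2 + 2 * t := by
      have h4 := norm_nonneg (x - z)
      have h5 := norm_nonneg (z - y)
      have h6 := norm_nonneg (x - y)
      have h7 : ‖x - z‖ ^ 2 ≤ (‖x - y‖ + ‖z - y‖) ^ 2 := by gcongr
      have h8 : ‖z - y‖ ^ 2 ≤ s ^ 2 := by gcongr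
      nlinarith [sq_nonneg (‖x - y‖ - ‖z - y‖)]
    have : -‖x - y‖ ^ 2 / (4 * t) = 1 / 4 - (2 * ‖x - y‖ ^ 2 + 2 * t) / (8 * t) := by
      field_simp
      ring
    rw [this]
    have h9 : ‖x - z‖ ^ 2 / (8 * t) ≤ (2 * ‖x - y‖ ^ 2 + 2 * t) / (8 * t) := by gcongr
    have : -(1 / (8 * t)) * ‖x - z‖ ^ 2 = - (‖x - z‖ ^ 2 / (8 * t)) := by ring
    rw [this]
    linarith
  set F : Euc N → Euc N → ℝ≥0∞ := fun y z =>
    Set.indicator {p : Euc N × Euc N | dist p.1 p.2 < s}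
      (fun p => G p.2 * ENNReal.ofReal (φ p.1)) (y, z) with hF
  have hFm : Measurable (Function.uncurry F) :=
    Measurable.indicator (by fun_prop) hS
  have hF1 : ∀ y, ∫⁻ z, F y z = (∫⁻ z in Metric.ball y s, G z) * ENNReal.ofReal (φ y) := by
    intro y
    rw [← lintegral_mul_const _ hGm, ← lintegral_indicator Metric.isOpen_ball.measurableSet]
    refine lintegral_congr fun z => ?_
    simp only [hF, Set.indicator, Set.mem_ofPred_eq, Metric.mem_ball, dist_comm y z]
  have hF2 : ∀ z, ∫⁻ y, F y z = G z * ∫⁻ y in Metric.ball z s, ENNReal.ofReal (φ y) := by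
    intro z
    rw [← lintegral_const_mul _ hφm, ← lintegral_indicator Metric.isOpen_ball.measurableSet]
    refine lintegral_congr fun y => ?_
    simp only [hF, Set.indicator, Set.mem_ofPred_eq, Metric.mem_ball]
  calc _ = ∫⁻ y, ENNReal.ofReal v * ENNReal.ofReal (Real.exp (-‖x - y‖ ^ 2 / (4 * t))) *
        ENNReal.ofReal (φ y) := by
        rw [← lintegral_const_mul' _ _ (by simp)]
        simp only [mul_assoc]
    _ ≤ ∫⁻ y, ∫⁻ z, F y z := by
        refine lintegral_mono fun y => ?_
        rw [hF1]
        exact mul_le_mul_left (pt y) _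
    _ = ∫⁻ z, ∫⁻ y, F y z := lintegral_lintegral_swap hFm.aemeasurable
    _ ≤ ∫⁻ z, G z * M := by
        refine lintegral_mono fun z => ?_
        rw [hF2]
        exact mul_le_mul_right (hM z) _
    _ = _ := by
        rw [lintegral_mul_const _ hGm]
        congr 1
        simp only [hG, ENNReal.ofReal_mul (Real.exp_pos _).le]
        rw [lintegral_const_mul' _ _ (by simp), gauss_lint N _ (by positivity)]
        congr 4
        field_simp

/-- Lemma 2.1: for `N ≥ 1` and `1 ≤ r ≤ ∞` there is `c* > 0` depending only
on `N, r` such that `‖S(t)φ‖_{L^∞} ≤ c* t^{-N/(2r)} |||φ|||_{r,ρ}` for `0 < t ≤ ρ²`. -/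
theorem statement0 (N : ℕ) (hN : 1 ≤ N) (r : ℝ≥0∞) (hr : 1 ≤ r) :
    ∃ c : ℝ, 0 < c ∧
      ∀ ρ : ℝ, 0 < ρ → ∀ φ : Euc N → ℝ, Measurable φ → (∀ x, 0 ≤ φ x) →
        ulocNorm N r ρ φ < ⊤ →
        ∀ t : ℝ, 0 < t → t ≤ ρ ^ 2 →
          heatSup N t φ ≤
            ENNReal.ofReal (c * t ^ (if r = ⊤ then (0 : ℝ) else -(N : ℝ) / (2 * r.toReal))) *
              ulocNorm N r ρ φ := by
  obtain ⟨C, hC, hav⟩ := avg_bound N hN r hr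
  obtain ⟨v, hv, hvol⟩ := vol_ball hN
  refine ⟨Real.exp (1 / 4) * 2 ^ ((N : ℝ) / 2) * C / v, by positivity, ?_⟩
  intro ρ hρ φ hφ h0 hfin t ht htρ
  have hpi := Real.pi_pos
  set s := Real.sqrt t with hsd
  have hs : 0 < s := Real.sqrt_pos.2 ht
  have hst : s ^ 2 = t := Real.sq_sqrt ht.le
  have hsρ : s ≤ ρ := Real.sqrt_le_iff.2 ⟨hρ.le, htρ⟩
  have hav' := hav ρ hρ φ hφ h0 hfin s hs hsρ
  refine essSup_le_of_ae_le _ (ae_of_all _ fun x => ?_)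
  have hc := heat_conv N t s (s ^ N * v) ht hs hst (fun z => hvol z s hs) φ hφ _ hav' x
  set e : ℝ := if r = ⊤ then (0 : ℝ) else -(N : ℝ) / r.toReal with he
  have hee : (if r = ⊤ then (0 : ℝ) else -(N : ℝ) / (2 * r.toReal)) = e / 2 := by
    rw [he]
    split_ifs
    · simp
    · rw [div_div, mul_comm]
  rw [hee]
  have hse : t ^ (e / 2) = s ^ e := by
    rw [hsd, Real.sqrt_eq_rpow, ← Real.rpow_mul ht.le]
    congr 1
    ring
  rw [hse]
  have hS : heatS N t φ x = ENNReal.ofReal ((4 * Real.pi * t) ^ (-(N : ℝ) / 2)) *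
      ∫⁻ y, ENNReal.ofReal (Real.exp (-‖x - y‖ ^ 2 / (4 * t))) * ENNReal.ofReal (φ y) := by
    rw [← lintegral_const_mul' _ _ (by simp)]
    refine lintegral_congr fun y => ?_
    rw [ENNReal.ofReal_mul (by positivity), ENNReal.ofReal_mul (by positivity), mul_assoc]
  rw [hS]
  set I := ∫⁻ y, ENNReal.ofReal (Real.exp (-‖x - y‖ ^ 2 / (4 * t))) * ENNReal.ofReal (φ y)
  set P := (4 * Real.pi * t) ^ (-(N : ℝ) / 2) with hP
  have hPp : 0 < P := by positivity
  have hVp : 0 < s ^ N * v := by positivity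
  have hsplit : P = P / (s ^ N * v) * (s ^ N * v) := by field_simp
  rw [hsplit, ENNReal.ofReal_mul (by positivity), mul_assoc]
  refine (mul_le_mul_right hc _).trans (le_of_eq ?_)
  rw [← mul_assoc, ← mul_assoc, ← ENNReal.ofReal_mul (by positivity),
    ← ENNReal.ofReal_mul (by positivity)]
  congr 2
  have h8 : (8 * Real.pi * t) ^ ((N : ℝ) / 2) = 2 ^ ((N : ℝ) / 2) * P⁻¹ := by
    rw [hP, neg_div, Real.rpow_neg (by positivity), inv_inv,
      ← Real.mul_rpow (by positivity) (by positivity)]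
    congr 1
    ring
  rw [h8]
  field_simp
end
end

section
/- Let N ≥ 1, p, q ≥ 0, 0 < T ≤ ∞, and let u₀, v₀ be nonnegative measurable functions on ℝ^N. The system (S) possesses a solution on ℝ^N × (0,T) if and only if the system (S) possesses a supersolution on ℝ^N × (0,T). -/
open MeasureTheory ENNReal Filter

noncomputable section

/-- The heat kernel. -/
def hk (N : ℕ) (t : ℝ) (x y : Euc N) : ℝ :=
  (4 * Real.pi * t) ^ (-(N : ℝ) / 2) * Real.exp (-‖x - y‖ ^ 2 / (4 * t))

/-- The extended-valued Duhamel operator. -/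
def dstep (N : ℕ) (p : ℝ) (f : Euc N → ℝ) (v : Euc N → ℝ → ℝ≥0∞) (x : Euc N) (t : ℝ) : ℝ≥0∞ :=
  heatS N t f x +
    ∫⁻ s in Set.Ioo 0 t, ∫⁻ y, ENNReal.ofReal (hk N (t - s) x y) * v y s ^ p

lemma hk_nonneg (N : ℕ) {t : ℝ} (ht : 0 < t) (x y : Euc N) : 0 ≤ hk N t x y := by
  unfold hk; positivity

lemma hk_measurable (N : ℕ) :
    Measurable (fun z : ℝ × Euc N × Euc N => hk N z.1 z.2.1 z.2.2) := by
  unfold hk; fun_prop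

lemma dstep_mono (N : ℕ) {p : ℝ} (hp : 0 ≤ p) (f : Euc N → ℝ) (v w : Euc N → ℝ → ℝ≥0∞)
    (x : Euc N) (t : ℝ)
    (h : ∀ s, 0 < s → s < t → ∀ᵐ y ∂(volume : Measure (Euc N)), v y s ≤ w y s) :
    dstep N p f v x t ≤ dstep N p f w x t := by
  unfold dstep
  refine add_le_add le_rfl ?_
  refine setLIntegral_mono' measurableSet_Ioo fun s hs => ?_
  refine lintegral_mono_ae ?_
  filter_upwards [h s hs.1 hs.2] with y hy
  gcongr

lemma dstep_measurable (N : ℕ) (p : ℝ) (f : Euc N → ℝ) (hf : Measurable f)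
    (v : Euc N → ℝ → ℝ≥0∞) (hv : Measurable (Function.uncurry v)) :
    Measurable (Function.uncurry (dstep N p f v)) := by
  have h1 : Measurable (fun z : Euc N × ℝ => heatS N z.2 f z.1) := by
    unfold heatS
    apply Measurable.lintegral_prod_right' (f := fun w : (Euc N × ℝ) × Euc N => ENNReal.ofReal
      ((4 * Real.pi * w.1.2) ^ (-(N : ℝ) / 2) *
        Real.exp (-‖w.1.1 - w.2‖ ^ 2 / (4 * w.1.2)) * f w.2))
    fun_prop
  have h2 : Measurable (fun z : Euc N × ℝ =>
      ∫⁻ s in Set.Ioo 0 z.2, ∫⁻ y, ENNReal.ofReal (hk N (z.2 - s) z.1 y) * v y s ^ p) := by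
    have e : ∀ z : Euc N × ℝ,
      ∫⁻ s in Set.Ioo 0 z.2, ∫⁻ y, ENNReal.ofReal (hk N (z.2 - s) z.1 y) * v y s ^ p =
      ∫⁻ s, ({w : (Euc N × ℝ) × ℝ | 0 < w.2 ∧ w.2 < w.1.2}.indicator (fun w =>
        ∫⁻ y, ENNReal.ofReal (hk N (w.1.2 - w.2) w.1.1 y) * v y w.2 ^ p)) (z, s) := by
      intro z
      rw [← lintegral_indicator measurableSet_Ioo]
      rfl
    simp_rw [e]
    apply Measurable.lintegral_prod_right'
    apply Measurable.indicator
    · apply Measurable.lintegral_prod_right' (f := fun w : ((Euc N × ℝ) × ℝ) × Euc N =>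
        ENNReal.ofReal (hk N (w.1.1.2 - w.1.2) w.1.1.1 w.2) * v w.2 w.1.2 ^ p)
      have a1 : Measurable (fun w : ((Euc N × ℝ) × ℝ) × Euc N =>
          hk N (w.1.1.2 - w.1.2) w.1.1.1 w.2) :=
        (hk_measurable N).comp (g := fun z : ℝ × Euc N × Euc N => hk N z.1 z.2.1 z.2.2)
          (f := fun w : ((Euc N × ℝ) × ℝ) × Euc N => (w.1.1.2 - w.1.2, w.1.1.1, w.2))
          (by fun_prop)
      have a2 : Measurable (fun w : ((Euc N × ℝ) × ℝ) × Euc N => v w.2 w.1.2) :=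
        hv.comp (f := fun w : ((Euc N × ℝ) × ℝ) × Euc N => (w.2, w.1.2)) (by fun_prop)
      exact a1.ennreal_ofReal.mul (a2.pow_const p)
    · exact (measurableSet_lt measurable_const measurable_snd).inter
        (measurableSet_lt measurable_snd (measurable_snd.comp measurable_fst))
  exact h1.add h2

lemma iSup_rpow_nat {p : ℝ} (hp : 0 ≤ p) (a : ℕ → ℝ≥0∞) :
    (⨆ n, a n) ^ p = ⨆ n, a n ^ p := by
  rcases hp.eq_or_lt with rfl | hp
  · simp
  · exact (ENNReal.orderIsoRpow p hp).map_iSup a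

lemma dstep_iSup (N : ℕ) {p : ℝ} (hp : 0 ≤ p) (f : Euc N → ℝ) 
    (v : ℕ → Euc N → ℝ → ℝ≥0∞) (hv : ∀ n, Measurable (Function.uncurry (v n)))
    (hm : ∀ y s, Monotone (fun n => v n y s)) (x : Euc N) (t : ℝ) :
    dstep N p f (fun y s => ⨆ n, v n y s) x t = ⨆ n, dstep N p f (v n) x t := by
  have a1 : Measurable (fun w : ℝ × Euc N => hk N (t - w.1) x w.2) :=
    (hk_measurable N).comp (g := fun z : ℝ × Euc N × Euc N => hk N z.1 z.2.1 z.2.2)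
      (f := fun w : ℝ × Euc N => (t - w.1, x, w.2)) (by fun_prop)
  have a2 : ∀ n, Measurable (fun w : ℝ × Euc N => v n w.2 w.1) := fun n =>
    (hv n).comp (f := fun w : ℝ × Euc N => (w.2, w.1)) (by fun_prop)
  have a3 : ∀ n, Measurable (fun w : ℝ × Euc N =>
      ENNReal.ofReal (hk N (t - w.1) x w.2) * v n w.2 w.1 ^ p) := fun n =>
    a1.ennreal_ofReal.mul ((a2 n).pow_const p)
  have mono : ∀ s y, Monotone (fun n => ENNReal.ofReal (hk N (t - s) x y) * v n y s ^ p) := by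
    intro s y m n hmn
    have := hm y s hmn
    dsimp only at this ⊢
    gcongr
  unfold dstep
  rw [← ENNReal.add_iSup]
  congr 1
  rw [← lintegral_iSup
    (f := fun n s => ∫⁻ y, ENNReal.ofReal (hk N (t - s) x y) * v n y s ^ p)]
  · refine lintegral_congr fun s => ?_
    rw [← lintegral_iSup
      (f := fun n y => ENNReal.ofReal (hk N (t - s) x y) * v n y s ^ p)]
    · refine lintegral_congr fun y => ?_
      rw [iSup_rpow_nat hp, ENNReal.mul_iSup]
    · intro n
      have b1 : Measurable (fun y : Euc N => hk N (t - s) x y) :=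
        (hk_measurable N).comp (g := fun z : ℝ × Euc N × Euc N => hk N z.1 z.2.1 z.2.2)
          (f := fun y : Euc N => (t - s, x, y)) (by fun_prop)
      have b2 : Measurable (fun y : Euc N => v n y s) :=
        (hv n).comp (f := fun y : Euc N => (y, s)) (by fun_prop)
      exact b1.ennreal_ofReal.mul (b2.pow_const p)
    · intro m n hmn y
      exact mono s y hmn
  · intro n
    exact (a3 n).lintegral_prod_right'
  · intro m n hmn s
    exact lintegral_mono fun y => mono s y hmn

lemma dstep_ofReal (N : ℕ) {p : ℝ} (hp : 0 ≤ p) (f : Euc N → ℝ)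
    (v : Euc N → ℝ → ℝ) (hv : ∀ x t, 0 ≤ v x t) (x : Euc N) (t : ℝ) :
    dstep N p f (fun y s => ENNReal.ofReal (v y s)) x t =
      heatS N t f x + ∫⁻ s in Set.Ioo 0 t, heatS N (t - s) (fun y => v y s ^ p) x := by
  unfold dstep
  congr 1
  refine setLIntegral_congr_fun measurableSet_Ioo fun s hs => ?_
  unfold heatS
  refine lintegral_congr fun y => ?_
  rw [ENNReal.ofReal_rpow_of_nonneg (hv y s) hp,
    ← ENNReal.ofReal_mul (hk_nonneg N (sub_pos.2 hs.2) x y)]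
  rfl

/-- Monotone iteration. -/
def dseq (N : ℕ) (p q : ℝ) (f g : Euc N → ℝ) :
    ℕ → (Euc N → ℝ → ℝ≥0∞) × (Euc N → ℝ → ℝ≥0∞)
  | 0 => (fun _ _ => 0, fun _ _ => 0)
  | n + 1 => (dstep N p f (dseq N p q f g n).2, dstep N q g (dseq N p q f g n).1)

lemma dseq_meas (N : ℕ) (p q : ℝ) (f g : Euc N → ℝ) (hf : Measurable f) (hg : Measurable g)
    (n : ℕ) : Measurable (Function.uncurry (dseq N p q f g n).1) ∧
      Measurable (Function.uncurry (dseq N p q f g n).2) := by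
  induction n with
  | zero => exact ⟨measurable_const, measurable_const⟩
  | succ n ih => exact ⟨dstep_measurable N p f hf _ ih.2, dstep_measurable N q g hg _ ih.1⟩

lemma dseq_succ_le (N : ℕ) {p q : ℝ} (hp : 0 ≤ p) (hq : 0 ≤ q) (f g : Euc N → ℝ) (n : ℕ) :
    (∀ x t, (dseq N p q f g n).1 x t ≤ (dseq N p q f g (n + 1)).1 x t) ∧
      (∀ x t, (dseq N p q f g n).2 x t ≤ (dseq N p q f g (n + 1)).2 x t) := by
  induction n with
  | zero => exact ⟨fun _ _ => zero_le, fun _ _ => zero_le⟩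
  | succ n ih =>
    exact ⟨fun x t => dstep_mono N hp f _ _ x t fun s _ _ => Eventually.of_forall fun y => ih.2 y s,
      fun x t => dstep_mono N hq g _ _ x t fun s _ _ => Eventually.of_forall fun y => ih.1 y s⟩

lemma locBdd_of_le (N : ℕ) (T : ℝ≥0∞) (U : Euc N → ℝ → ℝ≥0∞) (u : Euc N → ℝ → ℝ)
    (hu : ∀ x t, 0 ≤ u x t) (hb : LocBdd N T u)
    (h : ∀ t : ℝ, 0 < t → ENNReal.ofReal t < T →
      ∀ᵐ x ∂(volume : Measure (Euc N)), U x t ≤ ENNReal.ofReal (u x t)) :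
    LocBdd N T (fun x t => (U x t).toReal) := by
  intro τ hτ hT
  obtain ⟨M, hM⟩ := hb τ hτ hT
  refine ⟨M, fun t ht htT => ?_⟩
  have h0 : 0 < t := hτ.trans_le ht
  have h1 : ENNReal.ofReal t < T :=
    ((ENNReal.ofReal_lt_ofReal_iff (by linarith)).2 (by linarith)).trans_le htT
  filter_upwards [hM t ht htT, h t h0 h1] with x hx hx'
  rw [abs_of_nonneg ENNReal.toReal_nonneg]
  rw [abs_of_nonneg (hu x t)] at hx
  exact (ENNReal.toReal_le_of_le_ofReal (hu x t) hx').trans hx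

lemma super_to_sol (N : ℕ) (p q : ℝ) (hp : 0 ≤ p) (hq : 0 ≤ q)
    (T : ℝ≥0∞) (u₀ v₀ : Euc N → ℝ)
    (hu₀m : Measurable u₀) (hv₀m : Measurable v₀) (u v : Euc N → ℝ → ℝ)
    (h : IsSuperSys N p q u₀ v₀ T u v) :
    ∃ u v : Euc N → ℝ → ℝ, IsSolSys N p q u₀ v₀ T u v := by
  obtain ⟨⟨hu, hv, -, -, hub, hvb⟩, hD⟩ := h
  set a := dseq N p q u₀ v₀ with ha
  have hle : ∀ n, ∀ t : ℝ, 0 < t → ENNReal.ofReal t < T →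
      (∀ᵐ x ∂(volume : Measure (Euc N)), (a n).1 x t ≤ ENNReal.ofReal (u x t)) ∧
      (∀ᵐ x ∂(volume : Measure (Euc N)), (a n).2 x t ≤ ENNReal.ofReal (v x t)) := by
    intro n
    induction n with
    | zero => exact fun t _ _ => ⟨Eventually.of_forall fun _ => zero_le,
        Eventually.of_forall fun _ => zero_le⟩
    | succ n ih =>
      intro t ht htT
      have hs : ∀ s, s < t → ENNReal.ofReal s < T := fun s hs =>
        (ENNReal.ofReal_le_ofReal hs.le).trans_lt htT
      constructor
      · filter_upwards [(hD t ht htT).1] with x hx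
        rw [← dstep_ofReal N hp u₀ v hv] at hx
        exact (dstep_mono N hp u₀ _ _ x t fun s h1 h2 => (ih s h1 (hs s h2)).2).trans hx
      · filter_upwards [(hD t ht htT).2] with x hx
        rw [← dstep_ofReal N hq v₀ u hu] at hx
        exact (dstep_mono N hq v₀ _ _ x t fun s h1 h2 => (ih s h1 (hs s h2)).1).trans hx
  have m1 : ∀ x t, Monotone (fun n => (a n).1 x t) := fun x t =>
    monotone_nat_of_le_succ fun n => (dseq_succ_le N hp hq u₀ v₀ n).1 x t
  have m2 : ∀ x t, Monotone (fun n => (a n).2 x t) := fun x t =>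
    monotone_nat_of_le_succ fun n => (dseq_succ_le N hp hq u₀ v₀ n).2 x t
  have hm := dseq_meas N p q u₀ v₀ hu₀m hv₀m
  set U : Euc N → ℝ → ℝ≥0∞ := fun x t => ⨆ n, (a n).1 x t with hU
  set V : Euc N → ℝ → ℝ≥0∞ := fun x t => ⨆ n, (a n).2 x t with hV
  have eU : ∀ x t, U x t = dstep N p u₀ V x t := by
    intro x t
    rw [hV, dstep_iSup N hp u₀ (fun n => (a n).2) (fun n => (hm n).2) m2 x t]
    exact ((m1 x t).iSup_nat_add 1).symm
  have eV : ∀ x t, V x t = dstep N q v₀ U x t := by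
    intro x t
    rw [hU, dstep_iSup N hq v₀ (fun n => (a n).1) (fun n => (hm n).1) m1 x t]
    exact ((m2 x t).iSup_nat_add 1).symm
  have bU : ∀ t : ℝ, 0 < t → ENNReal.ofReal t < T →
      ∀ᵐ x ∂(volume : Measure (Euc N)), U x t ≤ ENNReal.ofReal (u x t) := by
    intro t ht htT
    filter_upwards [ae_all_iff.2 fun n => (hle n t ht htT).1] with x hx
    exact iSup_le hx
  have bV : ∀ t : ℝ, 0 < t → ENNReal.ofReal t < T →
      ∀ᵐ x ∂(volume : Measure (Euc N)), V x t ≤ ENNReal.ofReal (v x t) := by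
    intro t ht htT
    filter_upwards [ae_all_iff.2 fun n => (hle n t ht htT).2] with x hx
    exact iSup_le hx
  have fU : ∀ t : ℝ, 0 < t → ENNReal.ofReal t < T →
      ∀ᵐ x ∂(volume : Measure (Euc N)), ENNReal.ofReal (U x t).toReal = U x t := by
    intro t ht htT
    filter_upwards [bU t ht htT] with x hx
    exact ENNReal.ofReal_toReal (hx.trans_lt ENNReal.ofReal_lt_top).ne
  have fV : ∀ t : ℝ, 0 < t → ENNReal.ofReal t < T →
      ∀ᵐ x ∂(volume : Measure (Euc N)), ENNReal.ofReal (V x t).toReal = V x t := by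
    intro t ht htT
    filter_upwards [bV t ht htT] with x hx
    exact ENNReal.ofReal_toReal (hx.trans_lt ENNReal.ofReal_lt_top).ne
  have mU : Measurable (Function.uncurry U) :=
    Measurable.iSup fun n => (hm n).1
  have mV : Measurable (Function.uncurry V) :=
    Measurable.iSup fun n => (hm n).2
  refine ⟨fun x t => (U x t).toReal, fun x t => (V x t).toReal,
    ⟨fun _ _ => ENNReal.toReal_nonneg, fun _ _ => ENNReal.toReal_nonneg,
      mU.ennreal_toReal, mV.ennreal_toReal,
      locBdd_of_le N T U u hu hub bU, locBdd_of_le N T V v hv hvb bV⟩, ?_⟩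
  intro t ht htT
  have hs : ∀ s, s < t → ENNReal.ofReal s < T := fun s hs =>
    (ENNReal.ofReal_le_ofReal hs.le).trans_lt htT
  constructor
  · filter_upwards [fU t ht htT] with x hx
    rw [← dstep_ofReal N hp u₀ (fun x t => (V x t).toReal) (fun _ _ => ENNReal.toReal_nonneg),
      hx, eU]
    apply le_antisymm
    · exact dstep_mono N hp _ _ _ x t fun s h1 h2 => (fV s h1 (hs s h2)).mono fun y hy => hy.ge
    · exact dstep_mono N hp _ _ _ x t fun s h1 h2 => (fV s h1 (hs s h2)).mono fun y hy => hy.le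
  · filter_upwards [fV t ht htT] with x hx
    rw [← dstep_ofReal N hq v₀ (fun x t => (U x t).toReal) (fun _ _ => ENNReal.toReal_nonneg),
      hx, eV]
    apply le_antisymm
    · exact dstep_mono N hq _ _ _ x t fun s h1 h2 => (fU s h1 (hs s h2)).mono fun y hy => hy.ge
    · exact dstep_mono N hq _ _ _ x t fun s h1 h2 => (fU s h1 (hs s h2)).mono fun y hy => hy.le

/-- Lemma 2.2 for the system (S): the system possesses a solution on
`ℝ^N × (0,T)` if and only if it possesses a supersolution on `ℝ^N × (0,T)`. -/
theorem statement1 (N : ℕ) (hN : 1 ≤ N) (p q : ℝ) (hp : 0 ≤ p) (hq : 0 ≤ q)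
    (T : ℝ≥0∞) (hT : 0 < T) (u₀ v₀ : Euc N → ℝ)
    (hu₀m : Measurable u₀) (hv₀m : Measurable v₀)
    (hu₀ : ∀ x, 0 ≤ u₀ x) (hv₀ : ∀ x, 0 ≤ v₀ x) :
    (∃ u v : Euc N → ℝ → ℝ, IsSolSys N p q u₀ v₀ T u v) ↔
      (∃ u v : Euc N → ℝ → ℝ, IsSuperSys N p q u₀ v₀ T u v) := by
  constructor
  · rintro ⟨u, v, hr, hD⟩
    exact ⟨u, v, hr, fun t ht htT => ⟨(hD t ht htT).1.mono fun x hx => hx.ge,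
      (hD t ht htT).2.mono fun x hx => hx.ge⟩⟩
  · rintro ⟨u, v, h⟩
    exact super_to_sol N p q hp hq T u₀ v₀ hu₀m hv₀m u v h
end
end

section
/- Let N ≥ 1, α, β ≥ 1, A, B ≥ 0, 0 < T ≤ ∞, and let w₀ be a nonnegative measurable function on ℝ^N. The scalar problem (E) possesses a solution on ℝ^N × (0,T) if and only if it possesses a supersolution on ℝ^N × (0,T). -/
open MeasureTheory ENNReal Filter

noncomputable section

/-- The heat kernel with values in `[0,∞]`. -/
noncomputable def auxK (N : ℕ) (t : ℝ) (x y : Euc N) : ℝ≥0∞ :=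
  ENNReal.ofReal ((4 * Real.pi * t) ^ (-(N : ℝ) / 2) * Real.exp (-‖x - y‖ ^ 2 / (4 * t)))

/-- The nonlinearity with values in `[0,∞]`. -/
noncomputable def auxPhi (α β A B : ℝ) (z : ℝ≥0∞) : ℝ≥0∞ :=
  ENNReal.ofReal α * z ^ A + ENNReal.ofReal β * z ^ B

/-- The Duhamel map on `[0,∞]`-valued functions. -/
noncomputable def auxF (N : ℕ) (α β A B : ℝ) (w₀ : Euc N → ℝ) (g : Euc N × ℝ → ℝ≥0∞)
    (p : Euc N × ℝ) : ℝ≥0∞ :=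
  (∫⁻ y, auxK N p.2 p.1 y * ENNReal.ofReal (w₀ y)) +
    ∫⁻ s in Set.Ioo 0 p.2, ∫⁻ y, auxK N (p.2 - s) p.1 y * auxPhi α β A B (g (y, s))

/-- Picard iterates. -/
noncomputable def auxG (N : ℕ) (α β A B : ℝ) (w₀ : Euc N → ℝ) : ℕ → Euc N × ℝ → ℝ≥0∞
  | 0 => fun _ => 0
  | n + 1 => auxF N α β A B w₀ (auxG N α β A B w₀ n)

lemma auxK_meas (N : ℕ) :
    Measurable (fun q : ℝ × Euc N × Euc N => auxK N q.1 q.2.1 q.2.2) := by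
  unfold auxK
  fun_prop

lemma auxPhi_meas (α β A B : ℝ) : Measurable (auxPhi α β A B) := by
  unfold auxPhi
  fun_prop

lemma auxPhi_mono (α β : ℝ) {A B : ℝ} (hA : 0 ≤ A) (hB : 0 ≤ B) : Monotone (auxPhi α β A B) := by
  intro a b h
  unfold auxPhi
  gcongr

lemma aux_rpow_iSup {A : ℝ} (hA : 0 ≤ A) (f : ℕ → ℝ≥0∞) : (⨆ n, f n) ^ A = ⨆ n, f n ^ A := by
  rcases hA.eq_or_lt with h | h
  · subst h; simp
  · exact (ENNReal.orderIsoRpow A h).map_iSup f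

lemma auxPhi_iSup (α β : ℝ) {A B : ℝ} (hA : 0 ≤ A) (hB : 0 ≤ B) (f : ℕ → ℝ≥0∞)
    (hf : Monotone f) : auxPhi α β A B (⨆ n, f n) = ⨆ n, auxPhi α β A B (f n) := by
  unfold auxPhi
  rw [aux_rpow_iSup hA, aux_rpow_iSup hB, ENNReal.mul_iSup, ENNReal.mul_iSup,
    ENNReal.iSup_add_iSup_of_monotone]
  · intro a b h
    have := hf h
    dsimp only
    gcongr
  · intro a b h
    have := hf h
    dsimp only
    gcongr

lemma auxInner_meas (N : ℕ) (α β A B : ℝ) (g : Euc N × ℝ → ℝ≥0∞) (hg : Measurable g) :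
    Measurable (fun q : (Euc N × ℝ) × ℝ =>
      ∫⁻ y, auxK N (q.1.2 - q.2) q.1.1 y * auxPhi α β A B (g (y, q.2))) := by
  refine Measurable.lintegral_prod_right' (f := fun r : ((Euc N × ℝ) × ℝ) × Euc N =>
    auxK N (r.1.1.2 - r.1.2) r.1.1.1 r.2 * auxPhi α β A B (g (r.2, r.1.2))) ?_
  refine Measurable.mul ?_ ?_
  · exact (auxK_meas N).comp (g := fun q : ℝ × Euc N × Euc N => auxK N q.1 q.2.1 q.2.2)
      (f := fun r : ((Euc N × ℝ) × ℝ) × Euc N => (r.1.1.2 - r.1.2, r.1.1.1, r.2)) (by fun_prop)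
  · exact (auxPhi_meas α β A B).comp (hg.comp
      (f := fun r : ((Euc N × ℝ) × ℝ) × Euc N => (r.2, r.1.2)) (by fun_prop))

lemma auxF_meas (N : ℕ) (α β A B : ℝ) (w₀ : Euc N → ℝ) (hw : Measurable w₀)
    (g : Euc N × ℝ → ℝ≥0∞) (hg : Measurable g) : Measurable (auxF N α β A B w₀ g) := by
  unfold auxF
  refine Measurable.add ?_ ?_
  · refine Measurable.lintegral_prod_right' (f := fun r : (Euc N × ℝ) × Euc N =>
      auxK N r.1.2 r.1.1 r.2 * ENNReal.ofReal (w₀ r.2)) ?_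
    refine Measurable.mul ?_ (hw.comp measurable_snd).ennreal_ofReal
    exact (auxK_meas N).comp (g := fun q : ℝ × Euc N × Euc N => auxK N q.1 q.2.1 q.2.2)
      (f := fun r : (Euc N × ℝ) × Euc N => (r.1.2, r.1.1, r.2)) (by fun_prop)
  · have h : ∀ p : Euc N × ℝ, (∫⁻ s in Set.Ioo 0 p.2, ∫⁻ y,
        auxK N (p.2 - s) p.1 y * auxPhi α β A B (g (y, s))) =
        ∫⁻ s, {q : (Euc N × ℝ) × ℝ | 0 < q.2 ∧ q.2 < q.1.2}.indicator
          (fun q : (Euc N × ℝ) × ℝ =>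
            ∫⁻ y, auxK N (q.1.2 - q.2) q.1.1 y * auxPhi α β A B (g (y, q.2))) (p, s) := by
      intro p
      rw [← lintegral_indicator measurableSet_Ioo]
      rfl
    simp_rw [h]
    refine Measurable.lintegral_prod_right' (f := _) ?_
    refine (auxInner_meas N α β A B g hg).indicator ?_
    exact (measurableSet_lt measurable_const measurable_snd).inter
      (measurableSet_lt measurable_snd (measurable_snd.comp measurable_fst))

lemma auxG_meas (N : ℕ) (α β A B : ℝ) (w₀ : Euc N → ℝ) (hw : Measurable w₀) (n : ℕ) :
    Measurable (auxG N α β A B w₀ n) := by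
  induction n with
  | zero => exact measurable_const
  | succ n ih => exact auxF_meas N α β A B w₀ hw _ ih

lemma auxF_mono (N : ℕ) (α β : ℝ) {A B : ℝ} (hA : 0 ≤ A) (hB : 0 ≤ B) (w₀ : Euc N → ℝ)
    {g h : Euc N × ℝ → ℝ≥0∞} (t : ℝ)
    (hgh : ∀ s ∈ Set.Ioo 0 t, ∀ᵐ y ∂(volume : Measure (Euc N)), g (y, s) ≤ h (y, s))
    (x : Euc N) : auxF N α β A B w₀ g (x, t) ≤ auxF N α β A B w₀ h (x, t) := by
  unfold auxF
  refine add_le_add le_rfl ?_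
  refine setLIntegral_mono' measurableSet_Ioo fun s hs => ?_
  refine lintegral_mono_ae ?_
  filter_upwards [hgh s hs] with y hy
  exact mul_le_mul_right (auxPhi_mono α β hA hB hy) _

lemma auxG_mono (N : ℕ) (α β : ℝ) {A B : ℝ} (hA : 0 ≤ A) (hB : 0 ≤ B) (w₀ : Euc N → ℝ) :
    Monotone (auxG N α β A B w₀) := by
  refine monotone_nat_of_le_succ fun n => ?_
  induction n with
  | zero => intro p; exact zero_le
  | succ n ih =>
    intro p
    exact auxF_mono N α β hA hB w₀ p.2 (fun s _ => Eventually.of_forall fun y => ih (y, s)) p.1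

/-- The limit of the Picard iterates. -/
noncomputable def auxL (N : ℕ) (α β A B : ℝ) (w₀ : Euc N → ℝ) (p : Euc N × ℝ) : ℝ≥0∞ :=
  ⨆ n, auxG N α β A B w₀ n p

lemma auxL_fixed (N : ℕ) (α β : ℝ) {A B : ℝ} (hA : 0 ≤ A) (hB : 0 ≤ B) (w₀ : Euc N → ℝ)
    (hw : Measurable w₀) (p : Euc N × ℝ) :
    auxL N α β A B w₀ p = auxF N α β A B w₀ (auxL N α β A B w₀) p := by
  have hmono := auxG_mono N α β hA hB w₀
  have h1 : auxL N α β A B w₀ p = ⨆ n, auxG N α β A B w₀ (n + 1) p :=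
    (Monotone.iSup_nat_add (f := fun n => auxG N α β A B w₀ n p)
      (fun a b h => hmono h p) 1).symm
  rw [h1]
  simp only [auxG, auxF]
  rw [← ENNReal.add_iSup]
  congr 1
  rw [← lintegral_iSup]
  · congr 1
    funext s
    rw [← lintegral_iSup]
    · congr 1
      funext y
      rw [← ENNReal.mul_iSup]
      congr 1
      unfold auxL
      rw [auxPhi_iSup α β hA hB _ (fun a b h => hmono h _)]
    · intro n
      refine Measurable.mul ?_ ?_
      · exact (auxK_meas N).comp (g := fun q : ℝ × Euc N × Euc N => auxK N q.1 q.2.1 q.2.2)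
          (f := fun r : Euc N => (p.2 - s, p.1, r)) (by fun_prop)
      · exact (auxPhi_meas α β A B).comp ((auxG_meas N α β A B w₀ hw n).comp
          (f := fun y : Euc N => (y, s)) (by fun_prop))
    · intro a b h y
      exact mul_le_mul_right (auxPhi_mono α β hA hB (hmono h _)) _
  · intro n
    exact (auxInner_meas N α β A B _ (auxG_meas N α β A B w₀ hw n)).comp
      (f := fun s : ℝ => (p, s)) (by fun_prop)
  · intro a b h s
    refine lintegral_mono fun y => ?_
    exact mul_le_mul_right (auxPhi_mono α β hA hB (hmono h _)) _

lemma auxF_ofReal (N : ℕ) {α β A B : ℝ} (hα : 1 ≤ α) (hβ : 1 ≤ β) (hA : 0 ≤ A) (hB : 0 ≤ B)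
    (w₀ : Euc N → ℝ) (hw₀ : ∀ x, 0 ≤ w₀ x) (w : Euc N → ℝ → ℝ) (hw : ∀ x t, 0 ≤ w x t)
    (x : Euc N) (t : ℝ) :
    heatS N t w₀ x +
      (∫⁻ s in Set.Ioo 0 t, heatS N (t - s) (fun y => α * w y s ^ A + β * w y s ^ B) x) =
    auxF N α β A B w₀ (fun p => ENNReal.ofReal (w p.1 p.2)) (x, t) := by
  unfold auxF heatS auxK auxPhi
  congr 1
  · refine lintegral_congr fun y => ?_
    rw [ENNReal.ofReal_mul' (hw₀ y)]
  · refine lintegral_congr fun s => lintegral_congr fun y => ?_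
    have h1 : 0 ≤ w y s ^ A := Real.rpow_nonneg (hw y s) _
    have h2 : 0 ≤ w y s ^ B := Real.rpow_nonneg (hw y s) _
    have h3 : 0 ≤ α * w y s ^ A := by positivity
    have h4 : 0 ≤ β * w y s ^ B := by positivity
    rw [ENNReal.ofReal_mul' (add_nonneg h3 h4), ENNReal.ofReal_add h3 h4,
      ENNReal.ofReal_mul' h1, ENNReal.ofReal_mul' h2,
      ENNReal.ofReal_rpow_of_nonneg (hw y s) hA, ENNReal.ofReal_rpow_of_nonneg (hw y s) hB]

/-- Lemma 2.2 for the scalar problem (E): the scalar problem possesses a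
solution on `ℝ^N × (0,T)` if and only if it possesses a supersolution on `ℝ^N × (0,T)`. -/
theorem statement2 (N : ℕ) (hN : 1 ≤ N) (α β A B : ℝ) (hα : 1 ≤ α) (hβ : 1 ≤ β)
    (hA : 0 ≤ A) (hB : 0 ≤ B) (T : ℝ≥0∞) (hT : 0 < T) (w₀ : Euc N → ℝ)
    (hw₀m : Measurable w₀) (hw₀ : ∀ x, 0 ≤ w₀ x) :
    (∃ w : Euc N → ℝ → ℝ, IsSolScalar N α β A B w₀ T w) ↔
      (∃ w : Euc N → ℝ → ℝ, IsSuperScalar N α β A B w₀ T w) := by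
  constructor
  · rintro ⟨w, hr, hd⟩
    exact ⟨w, hr, fun t ht htT => (hd t ht htT).mono fun x hx => hx.ge⟩
  · rintro ⟨w, ⟨hnn, hm, hb⟩, hd⟩
    have hG : ∀ n : ℕ, ∀ t : ℝ, 0 < t → ENNReal.ofReal t < T →
        ∀ᵐ x ∂(volume : Measure (Euc N)), auxG N α β A B w₀ n (x, t) ≤ ENNReal.ofReal (w x t) := by
      intro n
      induction n with
      | zero => exact fun t _ _ => Eventually.of_forall fun x => zero_le
      | succ n ih =>
        intro t ht htT
        filter_upwards [hd t ht htT] with x hx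
        refine le_trans ?_ hx
        rw [auxF_ofReal N hα hβ hA hB w₀ hw₀ w hnn]
        exact auxF_mono N α β hA hB w₀ t (fun s hs => ih s hs.1
          ((ENNReal.ofReal_le_ofReal hs.2.le).trans_lt htT)) x
    have hL : ∀ t : ℝ, 0 < t → ENNReal.ofReal t < T →
        ∀ᵐ x ∂(volume : Measure (Euc N)), auxL N α β A B w₀ (x, t) ≤ ENNReal.ofReal (w x t) := by
      intro t ht htT
      filter_upwards [ae_all_iff.2 fun n => hG n t ht htT] with x hx
      exact iSup_le hx
    refine ⟨fun x t => (auxL N α β A B w₀ (x, t)).toReal, ⟨fun _ _ => ENNReal.toReal_nonneg,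
      ?_, ?_⟩, ?_⟩
    · exact (Measurable.iSup fun n => auxG_meas N α β A B w₀ hw₀m n).ennreal_toReal
    · intro τ hτ hτT
      obtain ⟨M, hM⟩ := hb τ hτ hτT
      refine ⟨M, fun t ht htT => ?_⟩
      have htT' : ENNReal.ofReal t < T :=
        ((ENNReal.ofReal_lt_ofReal_iff (by linarith)).2 (by linarith)).trans_le htT
      filter_upwards [hM t ht htT, hL t (by linarith) htT'] with x h1 h2
      rw [abs_of_nonneg ENNReal.toReal_nonneg]
      exact (ENNReal.toReal_le_of_le_ofReal (hnn x t) h2).trans ((le_abs_self _).trans h1)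
    · intro t ht htT
      have hfin : ∀ s : ℝ, 0 < s → ENNReal.ofReal s < T → ∀ᵐ x ∂(volume : Measure (Euc N)),
          ENNReal.ofReal (auxL N α β A B w₀ (x, s)).toReal = auxL N α β A B w₀ (x, s) := by
        intro s hs hsT
        filter_upwards [hL s hs hsT] with x hx
        exact ENNReal.ofReal_toReal (hx.trans_lt ENNReal.ofReal_lt_top).ne
      have hin : ∀ s ∈ Set.Ioo 0 t, ∀ᵐ x ∂(volume : Measure (Euc N)),
          ENNReal.ofReal (auxL N α β A B w₀ (x, s)).toReal = auxL N α β A B w₀ (x, s) :=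
        fun s hs => hfin s hs.1 ((ENNReal.ofReal_le_ofReal hs.2.le).trans_lt htT)
      filter_upwards [hfin t ht htT] with x hx
      rw [hx, auxF_ofReal N hα hβ hA hB w₀ hw₀ _ (fun _ _ => ENNReal.toReal_nonneg),
        auxL_fixed N α β hA hB w₀ hw₀m]
      exact le_antisymm
        (auxF_mono N α β hA hB w₀ t (fun s hs => (hin s hs).mono fun y hy => hy.ge) x)
        (auxF_mono N α β hA hB w₀ t (fun s hs => (hin s hs).mono fun y hy => hy.le) x)
end
end
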